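/- arXiv:1511.07240 — 2 statements merged into one kernel-verified Lean document; each statement's English description precedes it below -/
import Mathlib

section
/- There exists an absolute constant C₁ > 0 with the following property. Let n ≥ 2 be real, α ≥ 1, and let B = [x₀, x₀+αt] × [t/n, t] be a box of type (n, α) in the upper half-plane, with reflection B̄ = [x₀, x₀+αt] × [−t, −t/n]. If μ₁ and μ₂ are measurable functions on ℂ, each vanishing outside the lower half-plane {Im ζ < 0} with |μᵢ| ≤ 1 a.e. (i = 1, 2), and μ₁ = μ₂ a.e. on B̄, then | ⨍_B (2 Im(z)|Tμ₁(z)|)² dA(z)/Im z − ⨍_B (2 Im(z)|Tμ₂(z)|)² dA(z)/Im z | ≤ C₁/log n. -/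
open Complex MeasureTheory Filter Topology Set

/-- The derivative of the Beurling transform of `μ`:
`Tμ(z) = -(2/π) ∫_{Im ζ < 0} μ(ζ)/(ζ−z)³ dA(ζ)`. -/
noncomputable def Tderiv (μ : ℂ → ℂ) (z : ℂ) : ℂ :=
  -(2 / (Real.pi : ℂ)) * ∫ ζ in {ζ : ℂ | ζ.im < 0}, μ ζ / (ζ - z)^3

/-- The modified Beurling transform
`S^#μ(z) = -(1/π) ∫_{Im ζ<0} μ(ζ)[(ζ−z)⁻² − ζ⁻²] dA(ζ)`. -/
noncomputable def Ssharp (μ : ℂ → ℂ) (z : ℂ) : ℂ :=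
  -(1 / (Real.pi : ℂ)) * ∫ ζ in {ζ : ℂ | ζ.im < 0}, μ ζ * (((ζ - z)^2)⁻¹ - (ζ^2)⁻¹)

/-- The asymptotic variance over `[0,1]` of a function on the upper half-plane:
`σ²_{[0,1]}(b) = limsup_{y→0⁺} (1/log(1/y)) ∫₀¹ |b(x+iy)|² dx`. -/
noncomputable def sigma01 (b : ℂ → ℂ) : ℝ :=
  Filter.limsup (fun y : ℝ =>
    (1 / Real.log (1 / y)) *
      ∫ x in (0:ℝ)..1, ‖b ((x : ℂ) + (y : ℂ) * Complex.I)‖^2) (𝓝[>] (0:ℝ))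

/-- `Σ²_ℍ`: the supremum of `σ²_{[0,1]}(S^#μ)` over all measurable `μ` with
`|μ| ≤ 1` a.e. supported in the lower half-plane. -/
noncomputable def SigmaSqH : ℝ :=
  sSup {v : ℝ | ∃ μ : ℂ → ℂ, Measurable μ ∧ (∀ᵐ ζ : ℂ, ‖μ ζ‖ ≤ 1) ∧
    (∀ ζ : ℂ, 0 ≤ ζ.im → μ ζ = 0) ∧ v = sigma01 (Ssharp μ)}

/-
For `z` in the box, `Tμ₁(z) - Tμ₂(z)` only sees the part of the lower half-plane outside the
reflected box, so it is controlled by the mass of `|ζ - z|⁻³ dA(ζ)` there. The mass outside a disc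
of radius `r` about `z` is `2π / r`. This handles the region below the reflected box with `r = t`,
and the regions to its left and right with `r = √(d y)`, where `y = Im z` and `d` is the horizontal
distance from `z` to the side of the box. The strip `-t/n < Im ζ < 0` has mass at most
`(π t / n) / y²`, by comparison with a Cauchy density. These bounds integrate over the box to a
multiple of its width `α t`, without the factor `log n`. Since `2 y |Tμᵢ(z)|` is bounded, the
difference of the two energy densities is at most a constant times `|Tμ₁(z) - Tμ₂(z)|`, and dividing
by `α t log n` gives the bound.
-/

section ReImProduct

variable {f g : ℝ → ℝ} {I J : Set ℝ}

lemma integrableOn_reProdIm_mul (hf : IntegrableOn f I) (hg : IntegrableOn g J) :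
    IntegrableOn (fun z : ℂ => f z.re * g z.im) (I ×ℂ J) := by
  refine (volume_preserving_equiv_real_prod.integrableOn_comp_preimage
    measurableEquivRealProd.measurableEmbedding (s := I ×ˢ J)
    (f := fun p : ℝ × ℝ => f p.1 * g p.2)).2 ?_
  rw [IntegrableOn, Measure.volume_eq_prod, ← Measure.prod_restrict]
  exact hf.integrable.mul_prod hg.integrable

lemma setIntegral_reProdIm_mul (f g : ℝ → ℝ) (I J : Set ℝ) :
    ∫ z in I ×ℂ J, f z.re * g z.im = (∫ x in I, f x) * ∫ y in J, g y := by
  rw [← setIntegral_prod_mul, ← Measure.volume_eq_prod]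
  exact volume_preserving_equiv_real_prod.setIntegral_preimage_emb
    measurableEquivRealProd.measurableEmbedding (fun p : ℝ × ℝ => f p.1 * g p.2) (I ×ˢ J)

lemma measurableSet_reProdIm (hI : MeasurableSet I) (hJ : MeasurableSet J) :
    MeasurableSet (I ×ℂ J) :=
  (measurable_re hI).inter (measurable_im hJ)

lemma ae_re_ne (c : ℝ) : ∀ᵐ z : ℂ, z.re ≠ c :=
  (Measure.quasiMeasurePreserving_fst.comp
    volume_preserving_equiv_real_prod.quasiMeasurePreserving).ae
      (Measure.ae_ne volume c)

end ReImProduct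

section OneDimensionalIntegrals

variable {a b s t : ℝ}

lemma inv_sq_add_sq_eq_mul_inv_one_add_div_sq (w : ℝ) {h : ℝ} (hh : h ≠ 0) :
    (w ^ 2 + h ^ 2)⁻¹ = (h ^ 2)⁻¹ * (1 + (w / h) ^ 2)⁻¹ := by
  rw [← mul_inv]
  congr 1
  field_simp
  ring

lemma integrable_inv_sub_sq_add_sq (c : ℝ) {h : ℝ} (hh : h ≠ 0) :
    Integrable fun u : ℝ => ((u - c) ^ 2 + h ^ 2)⁻¹ := by
  simp_rw [inv_sq_add_sq_eq_mul_inv_one_add_div_sq _ hh]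
  exact ((integrable_inv_one_add_sq.comp_div hh).comp_sub_right c).const_mul _

lemma integral_inv_sub_sq_add_sq (c : ℝ) {h : ℝ} (hh : 0 < h) :
    ∫ u : ℝ, ((u - c) ^ 2 + h ^ 2)⁻¹ = Real.pi / h := by
  rw [integral_sub_right_eq_self (fun w : ℝ => (w ^ 2 + h ^ 2)⁻¹) c]
  simp_rw [inv_sq_add_sq_eq_mul_inv_one_add_div_sq _ hh.ne']
  rw [integral_const_mul, Measure.integral_comp_div (fun w : ℝ => (1 + w ^ 2)⁻¹) h,
    integral_univ_inv_one_add_sq, abs_of_pos hh, smul_eq_mul]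
  field_simp

lemma intervalIntegrable_inv_sq (hs : 0 < s) (hst : s ≤ t) :
    IntervalIntegrable (fun y : ℝ => (y ^ 2)⁻¹) volume s t := by
  refine ContinuousOn.intervalIntegrable_of_Icc hst fun y hy => ?_
  have hy0 : y ^ 2 ≠ 0 := (pow_pos (hs.trans_le hy.1) 2).ne'
  fun_prop (disch := assumption)

lemma integral_inv_sq (hs : 0 < s) (hst : s ≤ t) :
    ∫ y in s..t, (y ^ 2)⁻¹ = s⁻¹ - t⁻¹ := by
  have h := integral_zpow (a := s) (b := t) (n := -2)
    (Or.inr ⟨by norm_num, notMem_uIcc_of_lt hs (hs.trans_le hst)⟩)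
  norm_num [zpow_neg, zpow_ofNat] at h
  linarith

lemma integrableOn_Ioi_inv_sq {r : ℝ} (hr : 0 < r) :
    IntegrableOn (fun x : ℝ => (x ^ 2)⁻¹) (Ioi r) := by
  simpa using integrableOn_Ioi_rpow_of_lt (a := -2) (by norm_num) hr

lemma integral_Ioi_inv_sq {r : ℝ} (hr : 0 < r) : ∫ x in Ioi r, (x ^ 2)⁻¹ = r⁻¹ := by
  have h := integral_Ioi_rpow_of_lt (a := -2) (by norm_num) hr
  norm_num [Real.rpow_neg_one] at h
  exact h

lemma intervalIntegrable_inv_sqrt (hs : 0 ≤ s) (ht : 0 ≤ t) :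
    IntervalIntegrable (fun x => (√x)⁻¹) volume s t := by
  refine (intervalIntegral.intervalIntegrable_rpow' (r := -(1 / 2)) (by norm_num)).congr ?_
  intro x hx
  have hx0 : 0 ≤ x := (le_min hs ht).trans hx.1.le
  simp only [Real.sqrt_eq_rpow, Real.rpow_neg hx0]

lemma integral_inv_sqrt (hs : 0 ≤ s) (ht : 0 ≤ t) :
    ∫ x in s..t, (√x)⁻¹ = 2 * (√t - √s) := by
  have hrpow : ∫ x in s..t, (√x)⁻¹ = ∫ x in s..t, x ^ (-(1 / 2) : ℝ) := by
    refine intervalIntegral.integral_congr fun x hx => ?_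
    have hx0 : 0 ≤ x := (le_min hs ht).trans hx.1
    simp only [Real.sqrt_eq_rpow, Real.rpow_neg hx0]
  rw [hrpow, integral_rpow (Or.inl (by norm_num)), Real.sqrt_eq_rpow, Real.sqrt_eq_rpow]
  norm_num
  ring

lemma intervalIntegrable_inv_sqrt_sub_add_inv_sqrt_sub (hab : a ≤ b) :
    IntervalIntegrable (fun x => (√(x - a))⁻¹ + (√(b - x))⁻¹) volume a b := by
  have h := intervalIntegrable_inv_sqrt le_rfl (sub_nonneg.2 hab)
  have hleft := h.comp_sub_right a
  have hright := (h.comp_sub_left b).symm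
  simp only [zero_add, sub_add_cancel, sub_zero, sub_sub_cancel] at hleft hright
  exact hleft.add hright

lemma integral_inv_sqrt_sub_add_inv_sqrt_sub (hab : a ≤ b) :
    ∫ x in a..b, ((√(x - a))⁻¹ + (√(b - x))⁻¹) = 4 * √(b - a) := by
  have h := intervalIntegrable_inv_sqrt le_rfl (sub_nonneg.2 hab)
  have hleft := h.comp_sub_right a
  have hright := (h.comp_sub_left b).symm
  simp only [zero_add, sub_add_cancel, sub_zero, sub_sub_cancel] at hleft hright
  rw [intervalIntegral.integral_add hleft hright,
    intervalIntegral.integral_comp_sub_right (fun x => (√x)⁻¹),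
    intervalIntegral.integral_comp_sub_left (fun x => (√x)⁻¹), sub_self, sub_self,
    integral_inv_sqrt le_rfl (sub_nonneg.2 hab), Real.sqrt_zero]
  ring

end OneDimensionalIntegrals

/-- The measure `|ζ - z|⁻³ dA(ζ)`, whose mass on a set bounds the contribution of that set to the
integral defining `Tderiv` at `z`. -/
noncomputable def invCubeMeasure (z : ℂ) : Measure ℂ :=
  volume.withDensity fun ζ => ENNReal.ofReal (‖ζ - z‖ ^ 3)⁻¹

lemma invCubeMeasure_compl_ball (z : ℂ) {r : ℝ} (hr : 0 < r) :
    invCubeMeasure z (Metric.ball z r)ᶜ = ENNReal.ofReal (2 * Real.pi / r) := by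
  set F : ℝ → ℝ := (Ici r).indicator fun ρ => (ρ ^ 3)⁻¹
  have hradial : ∀ ρ ∈ Ioi (0 : ℝ),
      ρ ^ (Module.finrank ℝ ℂ - 1) • F ρ = (Ici r).indicator (fun ρ => (ρ ^ 2)⁻¹) ρ := by
    intro ρ (hρ : 0 < ρ)
    by_cases hrρ : r ≤ ρ
    · simp only [finrank_real_complex, Nat.add_one_sub_one, pow_one, mem_Ici, hrρ,
        indicator_of_mem, smul_eq_mul, F]
      field_simp
    · simp [F, hrρ]
  have hinter : Ioi 0 ∩ Ici r = Ici r := inter_eq_right.2 fun ρ hρ => hr.trans_le hρ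
  have hint : Integrable fun ζ : ℂ => F ‖ζ‖ := by
    rw [integrable_fun_norm_addHaar volume, integrableOn_congr_fun hradial measurableSet_Ioi,
      IntegrableOn, integrable_indicator_iff measurableSet_Ici, IntegrableOn,
      Measure.restrict_restrict measurableSet_Ici, inter_comm, hinter]
    exact (integrableOn_Ioi_inv_sq hr).congr_set_ae Ioi_ae_eq_Ici.symm
  have hval : ∫ ζ : ℂ, F ‖ζ‖ = 2 * Real.pi / r := by
    rw [integral_fun_norm_addHaar, setIntegral_congr_fun measurableSet_Ioi hradial,
      setIntegral_indicator measurableSet_Ici, hinter, integral_Ici_eq_integral_Ioi,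
      integral_Ioi_inv_sq hr, Measure.real, Complex.volume_ball]
    simp only [finrank_real_complex, ENNReal.ofReal_one, one_pow, one_mul, ENNReal.coe_toReal,
      NNReal.coe_real_pi, smul_eq_mul, nsmul_eq_mul, Nat.cast_ofNat]
    ring
  rw [invCubeMeasure, withDensity_apply _ Metric.isOpen_ball.measurableSet.compl,
    ← lintegral_indicator Metric.isOpen_ball.measurableSet.compl, ← hval,
    ofReal_integral_eq_lintegral_ofReal hint (.of_forall fun ζ => ?_),
    ← lintegral_sub_right_eq_self (fun ζ => ENNReal.ofReal (F ‖ζ‖)) z]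
  · refine lintegral_congr fun ζ => ?_
    by_cases hζ : r ≤ ‖ζ - z‖ <;> simp [F, hζ, dist_eq_norm]
  · exact indicator_nonneg (fun ρ hρ => by have := hr.trans_le hρ; positivity) _

lemma invCubeMeasure_le_of_forall_le_norm {z : ℂ} {r : ℝ} (hr : 0 < r) {S : Set ℂ}
    (hS : ∀ ζ ∈ S, r ≤ ‖ζ - z‖) :
    invCubeMeasure z S ≤ ENNReal.ofReal (2 * Real.pi / r) := by
  rw [← invCubeMeasure_compl_ball z hr]
  refine measure_mono fun ζ hζ => ?_
  simpa [dist_eq_norm] using hS ζ hζ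

lemma im_sub_im_le_norm_sub (z ζ : ℂ) : z.im - ζ.im ≤ ‖ζ - z‖ := by
  rw [norm_sub_rev]
  exact (le_abs_self _).trans (abs_im_le_norm (z - ζ))

/-- The lower half-plane, over which `Tderiv` integrates. It is an `abbrev` so that it unfolds to
the set-builder expression in the definition of `Tderiv`. -/
abbrev lowerHalfPlane : Set ℂ := {ζ | ζ.im < 0}

lemma measurableSet_lowerHalfPlane : MeasurableSet lowerHalfPlane :=
  measurableSet_lt measurable_im measurable_const

lemma invCubeMeasure_lowerHalfPlane_le {z : ℂ} (hz : 0 < z.im) :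
    invCubeMeasure z lowerHalfPlane ≤ ENNReal.ofReal (2 * Real.pi / z.im) := by
  refine invCubeMeasure_le_of_forall_le_norm hz fun ζ (hζ : ζ.im < 0) => ?_
  have := im_sub_im_le_norm_sub z ζ
  linarith

-- Both `d` and `z.im` bound `‖ζ - z‖` from below, hence so does their geometric mean; unlike their
-- maximum, it separates the variables.
lemma invCubeMeasure_lowerHalfPlane_inter_le {z : ℂ} {d : ℝ} (hz : 0 < z.im) (hd : 0 < d) :
    invCubeMeasure z (lowerHalfPlane ∩ {ζ | d ≤ |ζ.re - z.re|}) ≤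
      ENNReal.ofReal (2 * Real.pi * ((√d)⁻¹ * (√z.im)⁻¹)) := by
  rw [← mul_inv, ← div_eq_mul_inv]
  refine invCubeMeasure_le_of_forall_le_norm (by positivity) ?_
  rintro ζ ⟨hζim : ζ.im < 0, hζre : d ≤ |ζ.re - z.re|⟩
  have hre : √d ≤ √‖ζ - z‖ := Real.sqrt_le_sqrt (hζre.trans (abs_re_le_norm (ζ - z)))
  have him : √z.im ≤ √‖ζ - z‖ := by
    have := im_sub_im_le_norm_sub z ζ
    exact Real.sqrt_le_sqrt (by linarith)
  calc √d * √z.im ≤ √‖ζ - z‖ * √‖ζ - z‖ := by gcongr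
    _ = ‖ζ - z‖ := Real.mul_self_sqrt (norm_nonneg _)

lemma inv_norm_sub_pow_three_le {z ζ : ℂ} (hz : 0 < z.im) (hζ : ζ.im ≤ 0) :
    (‖ζ - z‖ ^ 3)⁻¹ ≤ ((ζ.re - z.re) ^ 2 + z.im ^ 2)⁻¹ * z.im⁻¹ := by
  have hnorm : z.im ≤ ‖ζ - z‖ := by
    have := im_sub_im_le_norm_sub z ζ
    linarith
  have hsq : (ζ.re - z.re) ^ 2 + z.im ^ 2 ≤ ‖ζ - z‖ ^ 2 := by
    rw [← normSq_eq_norm_sq, normSq_apply, sub_re, sub_im]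
    nlinarith
  rw [← mul_inv, pow_succ]
  gcongr

lemma invCubeMeasure_strip_le {z : ℂ} {s : ℝ} (hz : 0 < z.im) (hs : 0 ≤ s) :
    invCubeMeasure z {ζ | ζ.im ∈ Ioo (-s) 0} ≤
      ENNReal.ofReal (Real.pi * s * (z.im ^ 2)⁻¹) := by
  set G : ℂ → ℝ := fun ζ => ((ζ.re - z.re) ^ 2 + z.im ^ 2)⁻¹ * z.im⁻¹
  have hstrip : {ζ : ℂ | ζ.im ∈ Ioo (-s) 0} = univ ×ℂ Ioo (-s) 0 := by
    ext ζ
    simp [mem_reProdIm]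
  have hint : IntegrableOn G (univ ×ℂ Ioo (-s) 0) :=
    integrableOn_reProdIm_mul (integrable_inv_sub_sq_add_sq z.re hz.ne').integrableOn
      (integrableOn_const (C := z.im⁻¹) measure_Ioo_lt_top.ne)
  have hval : ∫ ζ in univ ×ℂ Ioo (-s) 0, G ζ = Real.pi * s * (z.im ^ 2)⁻¹ := by
    rw [setIntegral_reProdIm_mul (fun u => ((u - z.re) ^ 2 + z.im ^ 2)⁻¹) (fun _ => z.im⁻¹),
      setIntegral_univ, integral_inv_sub_sq_add_sq z.re hz, setIntegral_const,
      Real.volume_real_Ioo_of_le (by linarith), smul_eq_mul]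
    field_simp
    ring
  have hpos : 0 ≤ᵐ[volume.restrict (univ ×ℂ Ioo (-s) 0)] G :=
    .of_forall fun ζ => by positivity
  rw [hstrip, invCubeMeasure, withDensity_apply', ← hval,
    ofReal_integral_eq_lintegral_ofReal hint hpos]
  refine setLIntegral_mono' (measurableSet_reProdIm .univ measurableSet_Ioo) fun ζ hζ => ?_
  exact ENNReal.ofReal_le_ofReal (inv_norm_sub_pow_three_le hz hζ.2.2.le)

/-- An upper bound for the mass, under `invCubeMeasure z`, of what is left of the lower half-plane
when the box `[a, b] × [-t, -s]` is removed. The three summands account for the part below the box,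
the strip above it, and the parts to its left and right. -/
noncomputable def escapeBound (a b s t : ℝ) (z : ℂ) : ℝ :=
  2 * Real.pi / t + Real.pi * s * (z.im ^ 2)⁻¹ +
    2 * Real.pi * (((√(z.re - a))⁻¹ + (√(b - z.re))⁻¹) * (√z.im)⁻¹)

section Box

variable {a b s t : ℝ}

lemma escapeBound_nonneg (hs : 0 ≤ s) (ht : 0 ≤ t) (z : ℂ) : 0 ≤ escapeBound a b s t z := by
  unfold escapeBound
  positivity

lemma lowerHalfPlane_diff_subset {z : ℂ} :
    lowerHalfPlane \ (Icc a b ×ℂ Icc (-t) (-s)) ⊆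
      {ζ | ζ.im < -t} ∪ {ζ | ζ.im ∈ Ioo (-s) 0} ∪
        (lowerHalfPlane ∩ {ζ | z.re - a ≤ |ζ.re - z.re|} ∪
          lowerHalfPlane ∩ {ζ | b - z.re ≤ |ζ.re - z.re|}) := by
  rintro ζ ⟨him : ζ.im < 0, hbox⟩
  contrapose! hbox
  simp only [mem_union, mem_inter_iff, mem_ofPred_eq, mem_Ioo, not_or, not_and, not_lt,
    not_le] at hbox
  obtain ⟨⟨hlow, hhigh⟩, hleft, hright⟩ := hbox
  have hl := (abs_lt.1 (hleft him)).1
  have hr := (abs_lt.1 (hright him)).2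
  refine ⟨⟨by linarith, by linarith⟩, hlow, ?_⟩
  by_contra! hgt
  exact (hhigh hgt).not_gt him

lemma invCubeMeasure_lowerHalfPlane_diff_le (hs : 0 ≤ s) (ht : 0 < t) {z : ℂ} (hz : 0 < z.im)
    (ha : a < z.re) (hb : z.re < b) :
    invCubeMeasure z (lowerHalfPlane \ (Icc a b ×ℂ Icc (-t) (-s))) ≤
      ENNReal.ofReal (escapeBound a b s t z) := by
  have hbelow : invCubeMeasure z {ζ | ζ.im < -t} ≤ ENNReal.ofReal (2 * Real.pi / t) := by
    refine invCubeMeasure_le_of_forall_le_norm ht fun ζ (hζ : ζ.im < -t) => ?_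
    have := im_sub_im_le_norm_sub z ζ
    linarith
  have hstrip := invCubeMeasure_strip_le hz hs
  have hleft := invCubeMeasure_lowerHalfPlane_inter_le hz (sub_pos.2 ha)
  have hright := invCubeMeasure_lowerHalfPlane_inter_le hz (sub_pos.2 hb)
  unfold escapeBound
  rw [add_mul, mul_add, ENNReal.ofReal_add (by positivity) (by positivity),
    ENNReal.ofReal_add (by positivity) (by positivity),
    ENNReal.ofReal_add (by positivity) (by positivity)]
  refine (measure_mono (lowerHalfPlane_diff_subset (z := z))).trans ?_
  refine (measure_union_le _ _).trans (add_le_add ?_ ?_)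
  · exact (measure_union_le _ _).trans (add_le_add hbelow hstrip)
  · exact (measure_union_le _ _).trans (add_le_add hleft hright)

lemma integral_const_add_inv_sq_le (hs : 0 < s) (hst : s ≤ t) :
    ∫ y in s..t, (2 * Real.pi / t + Real.pi * s * (y ^ 2)⁻¹) ≤ 3 * Real.pi := by
  have ht : 0 < t := hs.trans_le hst
  rw [intervalIntegral.integral_add intervalIntegrable_const
      ((intervalIntegrable_inv_sq hs hst).const_mul _), intervalIntegral.integral_const,
    intervalIntegral.integral_const_mul, integral_inv_sq hs hst, smul_eq_mul]
  calc (t - s) * (2 * Real.pi / t) + Real.pi * s * (s⁻¹ - t⁻¹)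
      = 3 * Real.pi * (1 - s / t) := by field_simp; ring
    _ ≤ 3 * Real.pi * 1 := by gcongr; exact sub_le_self _ (by positivity)
    _ = 3 * Real.pi := mul_one _

lemma integrableOn_escapeBound_vertical (a b : ℝ) (hs : 0 < s) (hst : s ≤ t) :
    IntegrableOn (fun z : ℂ => 2 * Real.pi / t + Real.pi * s * (z.im ^ 2)⁻¹)
      (Icc a b ×ℂ Icc s t) := by
  have hone : IntegrableOn (fun _ => (1 : ℝ)) (Icc a b) :=
    integrableOn_const measure_Icc_lt_top.ne
  have hvert := (intervalIntegrable_iff_integrableOn_Icc_of_le hst).1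
    ((intervalIntegrable_const (c := 2 * Real.pi / t)).add
      ((intervalIntegrable_inv_sq hs hst).const_mul (Real.pi * s)))
  simpa only [one_mul] using integrableOn_reProdIm_mul hone hvert

lemma integrableOn_escapeBound_horizontal (hab : a ≤ b) (hs : 0 < s) (hst : s ≤ t) :
    IntegrableOn (fun z : ℂ => ((√(z.re - a))⁻¹ + (√(b - z.re))⁻¹) * (√z.im)⁻¹)
      (Icc a b ×ℂ Icc s t) :=
  integrableOn_reProdIm_mul
    ((intervalIntegrable_iff_integrableOn_Icc_of_le hab).1
      (intervalIntegrable_inv_sqrt_sub_add_inv_sqrt_sub hab))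
    ((intervalIntegrable_iff_integrableOn_Icc_of_le hst).1
      (intervalIntegrable_inv_sqrt hs.le (hs.le.trans hst)))

lemma integrableOn_escapeBound (hab : a ≤ b) (hs : 0 < s) (hst : s ≤ t) :
    IntegrableOn (escapeBound a b s t) (Icc a b ×ℂ Icc s t) :=
  (integrableOn_escapeBound_vertical a b hs hst).add
    ((integrableOn_escapeBound_horizontal hab hs hst).const_mul _)

lemma setIntegral_escapeBound_le (hab : a ≤ b) (hs : 0 < s) (hst : s ≤ t) :
    ∫ z in Icc a b ×ℂ Icc s t, escapeBound a b s t z ≤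
      Real.pi * (3 * (b - a) + 16 * √((b - a) * t)) := by
  have hab' : 0 ≤ b - a := sub_nonneg.2 hab
  have hvert : ∫ z in Icc a b ×ℂ Icc s t, (2 * Real.pi / t + Real.pi * s * (z.im ^ 2)⁻¹) ≤
      (b - a) * (3 * Real.pi) := by
    have h := setIntegral_reProdIm_mul (fun _ => 1)
      (fun y => 2 * Real.pi / t + Real.pi * s * (y ^ 2)⁻¹) (Icc a b) (Icc s t)
    simp only [one_mul] at h
    rw [h, setIntegral_const, Real.volume_real_Icc_of_le hab, smul_eq_mul, mul_one,
      integral_Icc_eq_integral_Ioc, ← intervalIntegral.integral_of_le hst]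
    gcongr
    exact integral_const_add_inv_sq_le hs hst
  have hhor : ∫ z in Icc a b ×ℂ Icc s t,
      ((√(z.re - a))⁻¹ + (√(b - z.re))⁻¹) * (√z.im)⁻¹ ≤ 4 * √(b - a) * (2 * √t) := by
    rw [setIntegral_reProdIm_mul (fun x => (√(x - a))⁻¹ + (√(b - x))⁻¹) (fun y => (√y)⁻¹),
      integral_Icc_eq_integral_Ioc, integral_Icc_eq_integral_Ioc,
      ← intervalIntegral.integral_of_le hab, ← intervalIntegral.integral_of_le hst,
      integral_inv_sqrt_sub_add_inv_sqrt_sub hab, integral_inv_sqrt hs.le (hs.le.trans hst)]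
    gcongr
    exact sub_le_self _ (Real.sqrt_nonneg s)
  calc ∫ z in Icc a b ×ℂ Icc s t, escapeBound a b s t z
      = (∫ z in Icc a b ×ℂ Icc s t, (2 * Real.pi / t + Real.pi * s * (z.im ^ 2)⁻¹)) +
          2 * Real.pi * ∫ z in Icc a b ×ℂ Icc s t,
            ((√(z.re - a))⁻¹ + (√(b - z.re))⁻¹) * (√z.im)⁻¹ := by
        rw [← integral_const_mul]
        exact integral_add (integrableOn_escapeBound_vertical a b hs hst)
          ((integrableOn_escapeBound_horizontal hab hs hst).const_mul _)
    _ ≤ (b - a) * (3 * Real.pi) + 2 * Real.pi * (4 * √(b - a) * (2 * √t)) := by gcongr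
    _ = Real.pi * (3 * (b - a) + 16 * √((b - a) * t)) := by
        rw [Real.sqrt_mul hab']
        ring

end Box

section Tderiv

variable {μ μ₁ μ₂ ν : ℂ → ℂ} {M : ℝ} {z : ℂ}

lemma lintegral_norm_div_sub_pow_three_le {E S : Set ℂ} (hE : MeasurableSet E) (hM : 0 ≤ M)
    (hν : ∀ᵐ ζ ∂volume.restrict S, ‖ν ζ‖ ≤ E.indicator (fun _ => M) ζ) (z : ℂ) :
    ∫⁻ ζ in S, ENNReal.ofReal ‖ν ζ / (ζ - z) ^ 3‖ ≤ ENNReal.ofReal M * invCubeMeasure z E := by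
  calc ∫⁻ ζ in S, ENNReal.ofReal ‖ν ζ / (ζ - z) ^ 3‖
      ≤ ∫⁻ ζ in S, E.indicator
          (fun ζ => ENNReal.ofReal M * ENNReal.ofReal (‖ζ - z‖ ^ 3)⁻¹) ζ := by
        refine lintegral_mono_ae ?_
        filter_upwards [hν] with ζ hζ
        by_cases hmem : ζ ∈ E
        · rw [indicator_of_mem hmem] at hζ ⊢
          rw [← ENNReal.ofReal_mul hM, norm_div, norm_pow, div_eq_mul_inv]
          gcongr
        · rw [indicator_of_notMem hmem, norm_le_zero_iff] at hζ
          simp [hζ]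
    _ ≤ ∫⁻ ζ in E, ENNReal.ofReal M * ENNReal.ofReal (‖ζ - z‖ ^ 3)⁻¹ := by
        rw [← lintegral_indicator hE]
        exact setLIntegral_le_lintegral _ _
    _ = ENNReal.ofReal M * invCubeMeasure z E := by
        rw [lintegral_const_mul _ (by fun_prop), invCubeMeasure, withDensity_apply _ hE]

lemma norm_Tderiv_le {E : Set ℂ} (hE : MeasurableSet E) (hM : 0 ≤ M)
    (hν : ∀ᵐ ζ ∂volume.restrict lowerHalfPlane, ‖ν ζ‖ ≤ E.indicator (fun _ => M) ζ)
    {K : ℝ} (hK : 0 ≤ K) (hEK : invCubeMeasure z E ≤ ENNReal.ofReal K) :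
    ‖Tderiv ν z‖ ≤ 2 / Real.pi * (M * K) := by
  have hlint : ∫⁻ ζ in lowerHalfPlane, ENNReal.ofReal ‖ν ζ / (ζ - z) ^ 3‖ ≤
      ENNReal.ofReal (M * K) := by
    rw [ENNReal.ofReal_mul hM]
    exact (lintegral_norm_div_sub_pow_three_le hE hM hν z).trans (by gcongr)
  have hconst : ‖-(2 / (Real.pi : ℂ))‖ = 2 / Real.pi := by
    rw [norm_neg, norm_div, norm_real, Real.norm_of_nonneg Real.pi_pos.le, norm_ofNat]
  rw [Tderiv, norm_mul, hconst]
  gcongr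
  exact (norm_integral_le_lintegral_norm _).trans
    (ENNReal.toReal_le_of_le_ofReal (by positivity) hlint)

lemma ae_norm_le_indicator_lowerHalfPlane
    (hb : ∀ᵐ ζ ∂volume.restrict lowerHalfPlane, ‖μ ζ‖ ≤ M) :
    ∀ᵐ ζ ∂volume.restrict lowerHalfPlane,
      ‖μ ζ‖ ≤ lowerHalfPlane.indicator (fun _ => M) ζ := by
  filter_upwards [hb, ae_restrict_mem measurableSet_lowerHalfPlane] with ζ hζ hmem
  rwa [indicator_of_mem (s := lowerHalfPlane) hmem]

lemma norm_Tderiv_le_div_im (hM : 0 ≤ M)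
    (hb : ∀ᵐ ζ ∂volume.restrict lowerHalfPlane, ‖μ ζ‖ ≤ M) (hz : 0 < z.im) :
    ‖Tderiv μ z‖ ≤ 4 * M / z.im := by
  refine (norm_Tderiv_le measurableSet_lowerHalfPlane hM
    (ae_norm_le_indicator_lowerHalfPlane hb) (by positivity)
    (invCubeMeasure_lowerHalfPlane_le hz)).trans_eq ?_
  field_simp
  ring

lemma integrableOn_div_sub_pow_three (hM : 0 ≤ M)
    (hμ : AEStronglyMeasurable μ (volume.restrict lowerHalfPlane))
    (hb : ∀ᵐ ζ ∂volume.restrict lowerHalfPlane, ‖μ ζ‖ ≤ M) (hz : 0 < z.im) :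
    IntegrableOn (fun ζ => μ ζ / (ζ - z) ^ 3) lowerHalfPlane := by
  refine ⟨hμ.div₀ (by fun_prop), ?_⟩
  rw [hasFiniteIntegral_iff_norm]
  refine (lintegral_norm_div_sub_pow_three_le measurableSet_lowerHalfPlane hM
    (ae_norm_le_indicator_lowerHalfPlane hb) z).trans_lt ?_
  exact ENNReal.mul_lt_top ENNReal.ofReal_lt_top
    ((invCubeMeasure_lowerHalfPlane_le hz).trans_lt ENNReal.ofReal_lt_top)

lemma aestronglyMeasurable_Tderiv
    (hμ : AEStronglyMeasurable μ (volume.restrict lowerHalfPlane)) :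
    AEStronglyMeasurable (Tderiv μ) := by
  refine AEStronglyMeasurable.const_mul ?_ _
  refine AEStronglyMeasurable.integral_prod_right'
    (f := fun p : ℂ × ℂ => μ p.2 / (p.2 - p.1) ^ 3) ?_
  exact (hμ.comp_snd).div₀ (by fun_prop)

lemma Tderiv_sub (hM : 0 ≤ M)
    (hμ₁ : AEStronglyMeasurable μ₁ (volume.restrict lowerHalfPlane))
    (hμ₂ : AEStronglyMeasurable μ₂ (volume.restrict lowerHalfPlane))
    (hb₁ : ∀ᵐ ζ ∂volume.restrict lowerHalfPlane, ‖μ₁ ζ‖ ≤ M)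
    (hb₂ : ∀ᵐ ζ ∂volume.restrict lowerHalfPlane, ‖μ₂ ζ‖ ≤ M) (hz : 0 < z.im) :
    Tderiv (μ₁ - μ₂) z = Tderiv μ₁ z - Tderiv μ₂ z := by
  simp only [Tderiv, Pi.sub_apply, sub_div]
  rw [integral_sub (integrableOn_div_sub_pow_three hM hμ₁ hb₁ hz)
    (integrableOn_div_sub_pow_three hM hμ₂ hb₂ hz), mul_sub]

/-- The density `(2 Im z |Tμ(z)|)² / Im z` with respect to area measure whose box averages are
compared; the weight `dA(z) / Im z` is part of it. -/
noncomputable def energyDensity (μ : ℂ → ℂ) (z : ℂ) : ℝ :=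
  (2 * z.im * ‖Tderiv μ z‖) ^ 2 / z.im

lemma energyDensity_nonneg (μ : ℂ → ℂ) (hz : 0 ≤ z.im) : 0 ≤ energyDensity μ z := by
  unfold energyDensity
  positivity

lemma energyDensity_le (hM : 0 ≤ M)
    (hb : ∀ᵐ ζ ∂volume.restrict lowerHalfPlane, ‖μ ζ‖ ≤ M) (hz : 0 < z.im) :
    energyDensity μ z ≤ (8 * M) ^ 2 / z.im := by
  have hle : 2 * z.im * ‖Tderiv μ z‖ ≤ 8 * M :=
    calc 2 * z.im * ‖Tderiv μ z‖ ≤ 2 * z.im * (4 * M / z.im) := by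
          gcongr
          exact norm_Tderiv_le_div_im hM hb hz
      _ = 8 * M := by field_simp; ring
  exact div_le_div_of_nonneg_right (pow_le_pow_left₀ (by positivity) hle 2) hz.le

lemma abs_energyDensity_sub_le (hM : 0 ≤ M)
    (hb₁ : ∀ᵐ ζ ∂volume.restrict lowerHalfPlane, ‖μ₁ ζ‖ ≤ M)
    (hb₂ : ∀ᵐ ζ ∂volume.restrict lowerHalfPlane, ‖μ₂ ζ‖ ≤ M) (hz : 0 < z.im) :
    |energyDensity μ₁ z - energyDensity μ₂ z| ≤ 32 * M * ‖Tderiv μ₁ z - Tderiv μ₂ z‖ := by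
  have hfactor : energyDensity μ₁ z - energyDensity μ₂ z =
      4 * z.im * (‖Tderiv μ₁ z‖ + ‖Tderiv μ₂ z‖) * (‖Tderiv μ₁ z‖ - ‖Tderiv μ₂ z‖) := by
    unfold energyDensity
    field_simp
    ring
  rw [hfactor, abs_mul, abs_of_nonneg (by positivity)]
  calc 4 * z.im * (‖Tderiv μ₁ z‖ + ‖Tderiv μ₂ z‖) * |‖Tderiv μ₁ z‖ - ‖Tderiv μ₂ z‖|
      ≤ 4 * z.im * (4 * M / z.im + 4 * M / z.im) * ‖Tderiv μ₁ z - Tderiv μ₂ z‖ := by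
        gcongr
        · exact norm_Tderiv_le_div_im hM hb₁ hz
        · exact norm_Tderiv_le_div_im hM hb₂ hz
        · exact abs_norm_sub_norm_le _ _
    _ = 32 * M * ‖Tderiv μ₁ z - Tderiv μ₂ z‖ := by field_simp; ring

variable {a b s t : ℝ}

lemma norm_Tderiv_sub_le (hM : 0 ≤ M)
    (hμ₁ : AEStronglyMeasurable μ₁ (volume.restrict lowerHalfPlane))
    (hμ₂ : AEStronglyMeasurable μ₂ (volume.restrict lowerHalfPlane))
    (hb₁ : ∀ᵐ ζ ∂volume.restrict lowerHalfPlane, ‖μ₁ ζ‖ ≤ M)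
    (hb₂ : ∀ᵐ ζ ∂volume.restrict lowerHalfPlane, ‖μ₂ ζ‖ ≤ M)
    (heq : ∀ᵐ w : ℂ, w ∈ Icc a b ×ℂ Icc (-t) (-s) → μ₁ w = μ₂ w)
    (hs : 0 ≤ s) (ht : 0 < t) (hz : 0 < z.im) (ha : a < z.re) (hb : z.re < b) :
    ‖Tderiv μ₁ z - Tderiv μ₂ z‖ ≤ 4 * M / Real.pi * escapeBound a b s t z := by
  have hE := measurableSet_lowerHalfPlane.diff
    (measurableSet_reProdIm (measurableSet_Icc (a := a) (b := b))
      (measurableSet_Icc (a := -t) (b := -s)))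
  have hdiff : ∀ᵐ ζ ∂volume.restrict lowerHalfPlane, ‖(μ₁ - μ₂) ζ‖ ≤
      (lowerHalfPlane \ (Icc a b ×ℂ Icc (-t) (-s))).indicator (fun _ => 2 * M) ζ := by
    filter_upwards [hb₁, hb₂, ae_restrict_of_ae heq,
      ae_restrict_mem measurableSet_lowerHalfPlane] with ζ h₁ h₂ heqζ hζ
    by_cases hbox : ζ ∈ Icc a b ×ℂ Icc (-t) (-s)
    · simp [hbox, heqζ hbox]
    · have hmem : ζ ∈ lowerHalfPlane \ (Icc a b ×ℂ Icc (-t) (-s)) := ⟨hζ, hbox⟩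
      rw [indicator_of_mem hmem]
      exact (norm_sub_le _ _).trans (by linarith)
  rw [← Tderiv_sub hM hμ₁ hμ₂ hb₁ hb₂ hz]
  refine (norm_Tderiv_le hE (by positivity) hdiff (escapeBound_nonneg hs ht.le z)
    (invCubeMeasure_lowerHalfPlane_diff_le hs ht hz ha hb)).trans_eq ?_
  ring

lemma integrableOn_energyDensity (hM : 0 ≤ M)
    (hμ : AEStronglyMeasurable μ (volume.restrict lowerHalfPlane))
    (hb : ∀ᵐ ζ ∂volume.restrict lowerHalfPlane, ‖μ ζ‖ ≤ M) (hs : 0 < s) :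
    IntegrableOn (energyDensity μ) (Icc a b ×ℂ Icc s t) := by
  have hbox : IsCompact (Icc a b ×ℂ Icc s t) := isCompact_Icc.reProdIm isCompact_Icc
  have him : AEStronglyMeasurable fun z : ℂ => z.im := measurable_im.aestronglyMeasurable
  have hmeas : AEStronglyMeasurable (energyDensity μ) :=
    (((him.const_mul 2).mul (aestronglyMeasurable_Tderiv hμ).norm).pow 2).div₀ him
  refine Measure.integrableOn_of_bounded (M := (8 * M) ^ 2 / s) hbox.measure_lt_top.ne hmeas ?_
  filter_upwards [ae_restrict_mem hbox.measurableSet] with z hz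
  have hsz : s ≤ z.im := hz.2.1
  have hz0 : 0 < z.im := hs.trans_le hsz
  rw [Real.norm_of_nonneg (energyDensity_nonneg μ hz0.le)]
  exact (energyDensity_le hM hb hz0).trans (by gcongr)

lemma abs_setIntegral_energyDensity_sub_le (hM : 0 ≤ M)
    (hμ₁ : AEStronglyMeasurable μ₁ (volume.restrict lowerHalfPlane))
    (hμ₂ : AEStronglyMeasurable μ₂ (volume.restrict lowerHalfPlane))
    (hb₁ : ∀ᵐ ζ ∂volume.restrict lowerHalfPlane, ‖μ₁ ζ‖ ≤ M)
    (hb₂ : ∀ᵐ ζ ∂volume.restrict lowerHalfPlane, ‖μ₂ ζ‖ ≤ M)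
    (heq : ∀ᵐ w : ℂ, w ∈ Icc a b ×ℂ Icc (-t) (-s) → μ₁ w = μ₂ w)
    (hab : a ≤ b) (hs : 0 < s) (hst : s ≤ t) :
    |(∫ z in Icc a b ×ℂ Icc s t, energyDensity μ₁ z) -
        ∫ z in Icc a b ×ℂ Icc s t, energyDensity μ₂ z| ≤
      128 * M ^ 2 * (3 * (b - a) + 16 * √((b - a) * t)) := by
  have hpointwise : ∀ᵐ z ∂volume.restrict (Icc a b ×ℂ Icc s t),
      ‖energyDensity μ₁ z - energyDensity μ₂ z‖ ≤
        128 * M ^ 2 / Real.pi * escapeBound a b s t z := by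
    filter_upwards [ae_restrict_mem (measurableSet_reProdIm measurableSet_Icc measurableSet_Icc),
      ae_restrict_of_ae (ae_re_ne a), ae_restrict_of_ae (ae_re_ne b)] with z hz hza hzb
    have hz0 : 0 < z.im := hs.trans_le hz.2.1
    calc ‖energyDensity μ₁ z - energyDensity μ₂ z‖
        ≤ 32 * M * ‖Tderiv μ₁ z - Tderiv μ₂ z‖ := abs_energyDensity_sub_le hM hb₁ hb₂ hz0
      _ ≤ 32 * M * (4 * M / Real.pi * escapeBound a b s t z) := by
          gcongr
          exact norm_Tderiv_sub_le hM hμ₁ hμ₂ hb₁ hb₂ heq hs.le (hs.trans_le hst) hz0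
            (hz.1.1.lt_of_ne' hza) (hz.1.2.lt_of_ne hzb)
      _ = 128 * M ^ 2 / Real.pi * escapeBound a b s t z := by ring
  rw [← integral_sub (integrableOn_energyDensity hM hμ₁ hb₁ hs)
    (integrableOn_energyDensity hM hμ₂ hb₂ hs), ← Real.norm_eq_abs]
  calc ‖∫ z in Icc a b ×ℂ Icc s t, (energyDensity μ₁ z - energyDensity μ₂ z)‖
      ≤ ∫ z in Icc a b ×ℂ Icc s t, 128 * M ^ 2 / Real.pi * escapeBound a b s t z :=
        norm_integral_le_of_norm_le ((integrableOn_escapeBound hab hs hst).const_mul _) hpointwise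
    _ ≤ 128 * M ^ 2 / Real.pi * (Real.pi * (3 * (b - a) + 16 * √((b - a) * t))) := by
        rw [integral_const_mul]
        gcongr
        exact setIntegral_escapeBound_le hab hs hst
    _ = 128 * M ^ 2 * (3 * (b - a) + 16 * √((b - a) * t)) := by field_simp

end Tderiv

theorem stmt6_general {M n α x₀ t : ℝ} (hM : 0 ≤ M) (hn : 1 < n) (hα : 0 < α) (ht : 0 < t)
    {μ₁ μ₂ : ℂ → ℂ} (hμ₁ : AEStronglyMeasurable μ₁ (volume.restrict lowerHalfPlane))
    (hμ₂ : AEStronglyMeasurable μ₂ (volume.restrict lowerHalfPlane))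
    (hb₁ : ∀ᵐ ζ ∂volume.restrict lowerHalfPlane, ‖μ₁ ζ‖ ≤ M)
    (hb₂ : ∀ᵐ ζ ∂volume.restrict lowerHalfPlane, ‖μ₂ ζ‖ ≤ M)
    (heq : ∀ᵐ w : ℂ, w ∈ Icc x₀ (x₀ + α * t) ×ℂ Icc (-t) (-(t / n)) → μ₁ w = μ₂ w) :
    |(∫ z in Icc x₀ (x₀ + α * t) ×ℂ Icc (t / n) t,
          (2 * z.im * ‖Tderiv μ₁ z‖) ^ 2 / z.im) / (α * t * Real.log n) -
      (∫ z in Icc x₀ (x₀ + α * t) ×ℂ Icc (t / n) t,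
          (2 * z.im * ‖Tderiv μ₂ z‖) ^ 2 / z.im) / (α * t * Real.log n)| ≤
      128 * M ^ 2 * (3 + 16 / √α) / Real.log n := by
  have hn0 : 0 < n := one_pos.trans hn
  have hlog : 0 < Real.log n := Real.log_pos hn
  have hbox := abs_setIntegral_energyDensity_sub_le hM hμ₁ hμ₂ hb₁ hb₂ heq
    (le_add_of_nonneg_right (by positivity)) (div_pos ht hn0) (div_le_self ht.le hn.le)
  have hsqrt : √(α * t * t) = α * t / √α := by
    rw [mul_assoc, Real.sqrt_mul hα.le, Real.sqrt_mul_self ht.le]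
    field_simp
    rw [Real.sq_sqrt hα.le]
  rw [add_sub_cancel_left, hsqrt] at hbox
  rw [← sub_div, abs_div, abs_of_pos (by positivity : 0 < α * t * Real.log n)]
  calc _ ≤ 128 * M ^ 2 * (3 * (α * t) + 16 * (α * t / √α)) / (α * t * Real.log n) := by
        gcongr
        exact hbox
    _ = 128 * M ^ 2 * (3 + 16 / √α) / Real.log n := by field_simp

theorem stmt6 : ∃ C₁ : ℝ, 0 < C₁ ∧
    ∀ n : ℝ, 2 ≤ n → ∀ α : ℝ, 1 ≤ α → ∀ x₀ t : ℝ, 0 < t →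
    ∀ μ₁ μ₂ : ℂ → ℂ, Measurable μ₁ → Measurable μ₂ →
    (∀ᵐ ζ : ℂ, ‖μ₁ ζ‖ ≤ 1) → (∀ᵐ ζ : ℂ, ‖μ₂ ζ‖ ≤ 1) →
    (∀ ζ : ℂ, 0 ≤ ζ.im → μ₁ ζ = 0) → (∀ ζ : ℂ, 0 ≤ ζ.im → μ₂ ζ = 0) →
    (∀ᵐ w : ℂ, w ∈ {w : ℂ | w.re ∈ Set.Icc x₀ (x₀ + α * t) ∧
        w.im ∈ Set.Icc (-t) (-(t / n))} → μ₁ w = μ₂ w) →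
    |(∫ z in {z : ℂ | z.re ∈ Set.Icc x₀ (x₀ + α * t) ∧ z.im ∈ Set.Icc (t / n) t},
          (2 * z.im * ‖Tderiv μ₁ z‖)^2 / z.im) / (α * t * Real.log n) -
      (∫ z in {z : ℂ | z.re ∈ Set.Icc x₀ (x₀ + α * t) ∧ z.im ∈ Set.Icc (t / n) t},
          (2 * z.im * ‖Tderiv μ₂ z‖)^2 / z.im) / (α * t * Real.log n)|
      ≤ C₁ / Real.log n := by
  refine ⟨128 * 1 ^ 2 * (3 + 16 / 1), by norm_num, ?_⟩
  intro n hn α hα x₀ t ht μ₁ μ₂ hμ₁ hμ₂ hb₁ hb₂ _ _ heq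
  refine (stmt6_general zero_le_one (by linarith) (by linarith) ht hμ₁.aestronglyMeasurable
    hμ₂.aestronglyMeasurable (ae_restrict_of_ae hb₁) (ae_restrict_of_ae hb₂) heq).trans ?_
  have hsqrt : 1 ≤ √α := Real.one_le_sqrt.2 hα
  have hlog : 0 ≤ Real.log n := Real.log_nonneg (by linarith)
  gcongr
end

section
/- Let y₀ > 0, α > 0, and let β > 0 be the positive root of β² + β = α. Suppose u : (0, y₀] → ℝ is twice continuously differentiable with u(y) ≥ 0 and u'(y) ≤ 0 for all y ∈ (0, y₀], and satisfies the differential inequality u''(y) ≥ α·u(y)/y² on (0, y₀]. If c > 0 is such that u(y₀) ≥ c·y₀^{−β} and −u'(y₀) ≥ β·c·y₀^{−β−1}, then u(y) ≥ c·y^{−β} for all y ∈ (0, y₀]. -/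
open Set

/-! The difference `w = u - c * y ^ (-β)` satisfies `α * w / y ^ 2 ≤ w''`, with `0 ≤ w` and `w' ≤ 0`
at `y₀`. Let `φ = y ^ p` be the solution of the Euler equation `φ'' = α * φ / y ^ 2` whose exponent
is the larger root of `p * (p - 1) = α`, so that `p ≥ 0`. The Wronskian `W = φ * w' - φ' * w` has
derivative `φ * w'' - φ'' * w ≥ 0` and is nonpositive at `y₀`, hence everywhere. Therefore `w / φ`,
whose derivative is `W / φ ^ 2`, is antitone, and `w` inherits its sign from `y₀`. -/

/-- The Wronskian `f * g' - f' * g` of `f` and `g`, used to compare a subsolution with a solution of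
a second-order linear equation. The derivatives `f'` and `g'` are arguments, so that they may be
taken within a set. -/
def wronskian (f f' g g' : ℝ → ℝ) (x : ℝ) : ℝ :=
  f x * g' x - f' x * g x

section Wronskian

variable {f f' f'' g g' g'' : ℝ → ℝ} {s : Set ℝ} {x b : ℝ}

theorem hasDerivWithinAt_wronskian
    (hf : HasDerivWithinAt f (f' x) s x) (hf' : HasDerivWithinAt f' (f'' x) s x)
    (hg : HasDerivWithinAt g (g' x) s x) (hg' : HasDerivWithinAt g' (g'' x) s x) :
    HasDerivWithinAt (wronskian f f' g g') (f x * g'' x - f'' x * g x) s x :=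
  ((hf.mul hg').sub (hf'.mul hg)).congr_deriv (by ring)

theorem hasDerivWithinAt_div_wronskian
    (hf : HasDerivWithinAt f (f' x) s x) (hg : HasDerivWithinAt g (g' x) s x) (hfx : f x ≠ 0) :
    HasDerivWithinAt (g / f) (wronskian f f' g g' x / f x ^ 2) s x :=
  (hg.div hf hfx).congr_deriv (by rw [wronskian]; ring)

theorem monotoneOn_wronskian (hs : Convex ℝ s)
    (hf : ∀ x ∈ s, HasDerivWithinAt f (f' x) s x) (hf' : ∀ x ∈ s, HasDerivWithinAt f' (f'' x) s x)
    (hg : ∀ x ∈ s, HasDerivWithinAt g (g' x) s x) (hg' : ∀ x ∈ s, HasDerivWithinAt g' (g'' x) s x)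
    (hfg : ∀ x ∈ s, f'' x * g x ≤ f x * g'' x) :
    MonotoneOn (wronskian f f' g g') s := by
  have hW : ∀ x ∈ s,
      HasDerivWithinAt (wronskian f f' g g') (f x * g'' x - f'' x * g x) s x := fun x hx =>
    hasDerivWithinAt_wronskian (hf x hx) (hf' x hx) (hg x hx) (hg' x hx)
  exact monotoneOn_of_hasDerivWithinAt_nonneg hs (HasDerivWithinAt.continuousOn hW)
    (fun x hx => (hW x (interior_subset hx)).mono interior_subset)
    (fun x hx => sub_nonneg.2 (hfg x (interior_subset hx)))

theorem antitoneOn_div_of_wronskian_nonpos (hs : Convex ℝ s)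
    (hf : ∀ x ∈ s, HasDerivWithinAt f (f' x) s x) (hg : ∀ x ∈ s, HasDerivWithinAt g (g' x) s x)
    (hf0 : ∀ x ∈ s, f x ≠ 0) (hW : ∀ x ∈ s, wronskian f f' g g' x ≤ 0) :
    AntitoneOn (g / f) s := by
  have hdiv : ∀ x ∈ s,
      HasDerivWithinAt (g / f) (wronskian f f' g g' x / f x ^ 2) s x := fun x hx =>
    hasDerivWithinAt_div_wronskian (hf x hx) (hg x hx) (hf0 x hx)
  exact antitoneOn_of_hasDerivWithinAt_nonpos hs (HasDerivWithinAt.continuousOn hdiv)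
    (fun x hx => (hdiv x (interior_subset hx)).mono interior_subset)
    (fun x hx => div_nonpos_of_nonpos_of_nonneg (hW x (interior_subset hx)) (sq_nonneg _))

theorem nonneg_of_wronskian_nonpos_of_isGreatest (hs : Convex ℝ s) (hb : IsGreatest s b)
    (hf : ∀ x ∈ s, HasDerivWithinAt f (f' x) s x) (hf' : ∀ x ∈ s, HasDerivWithinAt f' (f'' x) s x)
    (hg : ∀ x ∈ s, HasDerivWithinAt g (g' x) s x) (hg' : ∀ x ∈ s, HasDerivWithinAt g' (g'' x) s x)
    (hf0 : ∀ x ∈ s, 0 < f x) (hfg : ∀ x ∈ s, f'' x * g x ≤ f x * g'' x)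
    (hgb : 0 ≤ g b) (hWb : wronskian f f' g g' b ≤ 0) (hx : x ∈ s) :
    0 ≤ g x := by
  have hW : ∀ y ∈ s, wronskian f f' g g' y ≤ 0 := fun y hy =>
    (monotoneOn_wronskian hs hf hf' hg hg' hfg hy hb.1 (hb.2 hy)).trans hWb
  have hdiv : g b / f b ≤ g x / f x :=
    antitoneOn_div_of_wronskian_nonpos hs hf hg (fun y hy => (hf0 y hy).ne') hW hx hb.1 (hb.2 hx)
  have hquot : 0 ≤ g x / f x := (div_nonneg hgb (hf0 b hb.1).le).trans hdiv
  simpa only [div_mul_cancel₀ _ (hf0 x hx).ne'] using mul_nonneg hquot (hf0 x hx).le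

end Wronskian

section Euler

variable {α b x : ℝ} {s : Set ℝ} {w w' w'' : ℝ → ℝ}

theorem hasDerivAt_mul_rpow_sub_one (p : ℝ) (hx : x ≠ 0) :
    HasDerivAt (fun y : ℝ => p * y ^ (p - 1)) (p * (p - 1) * x ^ p / x ^ 2) x := by
  refine ((Real.hasDerivAt_rpow_const (Or.inl hx)).const_mul p).congr_deriv ?_
  rw [Real.rpow_sub_one hx, Real.rpow_sub_one hx]
  ring

theorem exists_nonneg_mul_sub_one_eq (hα : -1 / 4 ≤ α) : ∃ p : ℝ, 0 ≤ p ∧ p * (p - 1) = α := by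
  refine ⟨1 / 2 + √(α + 1 / 4), by positivity, ?_⟩
  linear_combination Real.sq_sqrt (show 0 ≤ α + 1 / 4 by linarith)

theorem nonneg_of_euler_le_of_isGreatest (hα : -1 / 4 ≤ α)
    (hs : Convex ℝ s) (hs0 : s ⊆ Ioi 0) (hb : IsGreatest s b)
    (hw : ∀ y ∈ s, HasDerivWithinAt w (w' y) s y) (hw' : ∀ y ∈ s, HasDerivWithinAt w' (w'' y) s y)
    (hineq : ∀ y ∈ s, α * w y / y ^ 2 ≤ w'' y) (hwb : 0 ≤ w b) (hwb' : w' b ≤ 0) (hx : x ∈ s) :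
    0 ≤ w x := by
  obtain ⟨p, hp0, hp⟩ := exists_nonneg_mul_sub_one_eq hα
  have hpow : ∀ q : ℝ, ∀ y ∈ s, 0 < y ^ q := fun q y hy => Real.rpow_pos_of_pos (hs0 hy) q
  refine nonneg_of_wronskian_nonpos_of_isGreatest hs hb
    (fun y hy => (Real.hasDerivAt_rpow_const (Or.inl (hs0 hy).ne')).hasDerivWithinAt)
    (fun y hy => (hasDerivAt_mul_rpow_sub_one p (hs0 hy).ne').hasDerivWithinAt)
    hw hw' (hpow p) (fun y hy => ?_) hwb ?_ hx
  · calc p * (p - 1) * y ^ p / y ^ 2 * w y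
        = y ^ p * (α * w y / y ^ 2) := by rw [hp]; ring
      _ ≤ y ^ p * w'' y := mul_le_mul_of_nonneg_left (hineq y hy) (hpow p y hy).le
  · exact sub_nonpos.2 <| (mul_nonpos_of_nonneg_of_nonpos (hpow p b hb.1).le hwb').trans
      (mul_nonneg (mul_nonneg hp0 (hpow (p - 1) b hb.1).le) hwb)

end Euler

theorem stmt8_general (y₀ α β : ℝ) (hβα : β ^ 2 + β = α) (u u' u'' : ℝ → ℝ)
    (hder1 : ∀ y ∈ Ioc 0 y₀, HasDerivWithinAt u (u' y) (Ioc 0 y₀) y)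
    (hder2 : ∀ y ∈ Ioc 0 y₀, HasDerivWithinAt u' (u'' y) (Ioc 0 y₀) y)
    (hineq : ∀ y ∈ Ioc 0 y₀, α * u y / y ^ 2 ≤ u'' y)
    (c : ℝ) (hval : c * y₀ ^ (-β) ≤ u y₀) (hder : β * c * y₀ ^ (-β - 1) ≤ -u' y₀) :
    ∀ y ∈ Ioc 0 y₀, c * y ^ (-β) ≤ u y := by
  intro y hy
  have hα : -1 / 4 ≤ α := by linarith [sq_nonneg (β + 1 / 2)]
  refine sub_nonneg.1 <| nonneg_of_euler_le_of_isGreatest (w := fun x => u x - c * x ^ (-β)) hα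
    (convex_Ioc 0 y₀) Ioc_subset_Ioi_self (isGreatest_Ioc (hy.1.trans_le hy.2))
    (fun x hx => (hder1 x hx).sub
      ((Real.hasDerivAt_rpow_const (Or.inl hx.1.ne')).const_mul c).hasDerivWithinAt)
    (fun x hx => (hder2 x hx).sub
      ((hasDerivAt_mul_rpow_sub_one (-β) hx.1.ne').const_mul c).hasDerivWithinAt)
    (fun x hx => ?_) (sub_nonneg.2 hval) (by linarith) hy
  calc α * (u x - c * x ^ (-β)) / x ^ 2
      = α * u x / x ^ 2 - c * (-β * (-β - 1) * x ^ (-β) / x ^ 2) := by rw [← hβα]; ring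
    _ ≤ u'' x - c * (-β * (-β - 1) * x ^ (-β) / x ^ 2) := sub_le_sub_right (hineq x hx) _

theorem stmt8 (y₀ α β : ℝ) (hy₀ : 0 < y₀) (hα : 0 < α)
    (hβ : 0 < β) (hβα : β^2 + β = α)
    (u u' u'' : ℝ → ℝ)
    (hder1 : ∀ y ∈ Set.Ioc 0 y₀, HasDerivWithinAt u (u' y) (Set.Ioc 0 y₀) y)
    (hder2 : ∀ y ∈ Set.Ioc 0 y₀, HasDerivWithinAt u' (u'' y) (Set.Ioc 0 y₀) y)
    (hcont : ContinuousOn u'' (Set.Ioc 0 y₀))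
    (hnonneg : ∀ y ∈ Set.Ioc 0 y₀, 0 ≤ u y)
    (hdec : ∀ y ∈ Set.Ioc 0 y₀, u' y ≤ 0)
    (hineq : ∀ y ∈ Set.Ioc 0 y₀, α * u y / y^2 ≤ u'' y)
    (c : ℝ) (hc : 0 < c)
    (hval : c * y₀ ^ (-β) ≤ u y₀)
    (hder : β * c * y₀ ^ (-β - 1) ≤ -u' y₀) :
    ∀ y ∈ Set.Ioc 0 y₀, c * y ^ (-β) ≤ u y :=
  stmt8_general y₀ α β hβα u u' u'' hder1 hder2 hineq c hval hder
end
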